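/- Let {η_k : k∈ℤ₊²} be uniformly bounded random variables and suppose that for some ϵ>0, Var( (1/(log n₁ log n₂)) Σ_{k∈R_n} η_k/(k₁k₂) ) = O( (log log n₁ · log log n₂)^{−(1+ϵ)} ) as n→∞. Then (1/(log n₁ log n₂)) Σ_{k∈R_n} (η_k − E η_k)/(k₁k₂) → 0 almost surely as n→∞. -/

import Mathlib

open MeasureTheory ProbabilityTheory Filter Real Finset Asymptotics

noncomputable section

namespace RandomFieldMissing

/-- The index set `ℤ₊²` (we use `ℕ × ℕ`, with the relevant indices having positive
coordinates). -/
abbrev Idx : Type := ℕ × ℕ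

/-- The rectangle `R_n = {1,…,n₁} × {1,…,n₂}`. -/
def Rn (n : Idx) : Finset Idx := Finset.Icc (1, 1) n

open scoped Classical in
/-- A classical real-valued indicator of a proposition. -/
def ind (P : Prop) : ℝ := if P then 1 else 0

variable {Ω : Type*} [MeasurableSpace Ω]

/-- `γ(f) = inf {x ∈ ℝ : P(f ≤ x) > 0}`, the left endpoint of the support of `f`. -/
def leftEnd (μ : Measure Ω) (f : Ω → ℝ) : ℝ := sInf {x : ℝ | 0 < μ {ω | f ω ≤ x}}

/-- The observed variable `X_i(ε) = (1 - ε_i) γ(X_i) + ε_i X_i`. -/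
def obs (μ : Measure Ω) (X : Idx → Ω → ℝ) (eps : Idx → Ω → ℝ) (i : Idx) (ω : Ω) : ℝ :=
  (1 - eps i ω) * leftEnd μ (X i) + eps i ω * X i ω

/-- Tail probability `P(X_i > w_i)`. -/
def tailP (μ : Measure Ω) (X : Idx → Ω → ℝ) (w : Idx → ℝ) (i : Idx) : ℝ :=
  (μ {ω | w i < X i ω}).toReal

/-- Probability of the joint lower event with levels `u` on `A` and `v` on `B`. -/
def puv (μ : Measure Ω) (X : Idx → Ω → ℝ) (u v : Idx → ℝ) (A B : Finset Idx) : ℝ :=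
  (μ {ω | (∀ i ∈ A, X i ω ≤ u i) ∧ (∀ j ∈ B, X j ω ≤ v j)}).toReal

/-- The distance of the first (resp. second) coordinate projections of `I` and `J`
is at least `m.1` (resp. `m.2`). -/
def sep (I J : Finset Idx) (m : Idx) : Prop :=
  (∀ a ∈ I, ∀ b ∈ J, m.1 ≤ max a.1 b.1 - min a.1 b.1) ∨
  (∀ a ∈ I, ∀ b ∈ J, m.2 ≤ max a.2 b.2 - min a.2 b.2)

/-- `I` is a union of members of the family `𝒦` of partition rectangles. -/
def IsUnionOf (𝒦 : Finset (Finset Idx)) (I : Finset Idx) : Prop :=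
  ∃ S ⊆ 𝒦, I = S.sup id

/-- The mixing coefficient `α_{n,m₁,m₂}` of condition `D(u_{n,i}, v_{n,i})`: the supremum,
over pairs `(I, J)` of unions of partition rectangles whose first-coordinate projections are
at distance `≥ m₁` or whose second-coordinate projections are at distance `≥ m₂`, and over
splittings `I = I₁ ∪ I₂`, `J = J₁ ∪ J₂` into disjoint pieces, of
`|P(∩_{I₁∪J₁}{X ≤ u} ∩ ∩_{I₂∪J₂}{X ≤ v}) - P(∩_{I₁}{X ≤ u} ∩ ∩_{I₂}{X ≤ v}) ·
P(∩_{J₁}{X ≤ u} ∩ ∩_{J₂}{X ≤ v})|`. -/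
def alphaMix (μ : Measure Ω) (X : Idx → Ω → ℝ) (u v : Idx → ℝ)
    (𝒦 : Finset (Finset Idx)) (m : Idx) : ℝ :=
  ⨆ p : {p : (Finset Idx × Finset Idx) × (Finset Idx × Finset Idx) //
      IsUnionOf 𝒦 (p.1.1 ∪ p.1.2) ∧ IsUnionOf 𝒦 (p.2.1 ∪ p.2.2) ∧
      Disjoint p.1.1 p.1.2 ∧ Disjoint p.2.1 p.2.2 ∧
      sep (p.1.1 ∪ p.1.2) (p.2.1 ∪ p.2.2) m},
    |puv μ X u v ((p : (Finset Idx × Finset Idx) × (Finset Idx × Finset Idx)).1.1 ∪ p.1.2.1)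
        (p.1.1.2 ∪ p.1.2.2) -
      puv μ X u v p.1.1.1 p.1.1.2 * puv μ X u v p.1.2.1 p.1.2.2|

/-- The data of condition `D(u_{n,i}, v_{n,i})`: for each `n`, a partition of `R_n` into
`k_{n₁} k_{n₂}` disjoint rectangles along which the exceedance mass is asymptotically
equidistributed, with `k_{n₁}, k_{n₂} → ∞` and `k_{n_i} m_{n_i}/n_i → 0`. -/
structure PartitionScheme (μ : Measure Ω) (X : Idx → Ω → ℝ) (u v : Idx → Idx → ℝ) where
  k1 : ℕ → ℕ
  k2 : ℕ → ℕ
  m1 : ℕ → ℕ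
  m2 : ℕ → ℕ
  K : Idx → Finset (Finset Idx)
  cover : ∀ n, (K n).sup id = Rn n
  disj : ∀ n, ∀ A ∈ K n, ∀ B ∈ K n, A ≠ B → Disjoint A B
  rect : ∀ n, ∀ A ∈ K n, ∃ a b : Idx, A = Finset.Icc a b
  card_eq : ∀ n : Idx, (K n).card = k1 n.1 * k2 n.2
  k1_top : Tendsto k1 atTop atTop
  k2_top : Tendsto k2 atTop atTop
  km1 : Tendsto (fun j : ℕ => (k1 j * m1 j : ℝ) / j) atTop (nhds 0)
  km2 : Tendsto (fun j : ℕ => (k2 j * m2 j : ℝ) / j) atTop (nhds 0)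
  equalMass : ∀ w : Idx → Idx → ℝ, w = u ∨ w = v →
    ∀ As : Idx → Finset Idx, (∀ n, As n ∈ K n) →
      Tendsto (fun n : Idx => ∑ i ∈ As n, tailP μ X (w n) i
        - (∑ i ∈ Rn n, tailP μ X (w n) i) / (k1 n.1 * k2 n.2)) atTop (nhds 0)

/-- Condition `D(u_{n,i}, v_{n,i})`: `k_{n₁} k_{n₂} α_{n, m_{n₁}, m_{n₂}} → 0`. -/
def CondD {μ : Measure Ω} {X : Idx → Ω → ℝ} {u v : Idx → Idx → ℝ}
    (S : PartitionScheme μ X u v) : Prop :=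
  Tendsto (fun n : Idx => (S.k1 n.1 * S.k2 n.2 : ℝ) *
    alphaMix μ X (u n) (v n) (S.K n) (S.m1 n.1, S.m2 n.2)) atTop (nhds 0)

/-- Condition `D'(v_{n,i})`: for each (choice of) partition rectangle `I`,
`k_{n₁} k_{n₂} ∑_{i ≠ j ∈ I} P(X_i > v_{n,i}, X_j > v_{n,j}) → 0`. -/
def CondD' {μ : Measure Ω} {X : Idx → Ω → ℝ} {u v : Idx → Idx → ℝ}
    (S : PartitionScheme μ X u v) : Prop :=
  ∀ As : Idx → Finset Idx, (∀ n, As n ∈ S.K n) →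
    Tendsto (fun n : Idx => (S.k1 n.1 * S.k2 n.2 : ℝ) *
      ∑ i ∈ As n, ∑ j ∈ (As n).erase i,
        (μ {ω | v n i < X i ω ∧ v n j < X j ω}).toReal) atTop (nhds 0)

/-- The set `M_{kn} = {j ∈ ℕ² : 0 ≤ j_i ≤ #(π_i(R_k ∩ R_n)) + m_{n_i}, i = 1,2}`. -/
def Mkn (k n m : Idx) : Finset Idx :=
  Finset.Icc (0, 0) (((Rn k ∩ Rn n).image Prod.fst).card + m.1,
    ((Rn k ∩ Rn n).image Prod.snd).card + m.2)

/-- The mixing coefficient `α*_{n,k,m₁,m₂}` of condition `D*`: the supremum over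
`I₁ ⊆ R_k`, `I₂ ⊆ R_n ∖ M_{kn}` of
`|P(∩_{I₁}{X ≤ v_k} ∩ ∩_{R_k}{X ≤ u_k} ∩ ∩_{I₂}{X ≤ v_n} ∩ ∩_{R_n∖M_{kn}}{X ≤ u_n})
 - P(∩_{I₁}{X ≤ v_k} ∩ ∩_{R_k}{X ≤ u_k}) · P(∩_{I₂}{X ≤ v_n} ∩ ∩_{R_n∖M_{kn}}{X ≤ u_n})|`. -/
def alphaStar (μ : Measure Ω) (X : Idx → Ω → ℝ) (uk vk un vn : Idx → ℝ)
    (k n m : Idx) : ℝ :=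
  ⨆ p : {p : Finset Idx × Finset Idx // p.1 ⊆ Rn k ∧ p.2 ⊆ Rn n \ Mkn k n m},
    |(μ {ω | (∀ i ∈ (p : Finset Idx × Finset Idx).1, X i ω ≤ vk i) ∧
        (∀ j ∈ Rn k, X j ω ≤ uk j) ∧ (∀ i ∈ p.1.2, X i ω ≤ vn i) ∧
        (∀ j ∈ Rn n \ Mkn k n m, X j ω ≤ un j)}).toReal -
      (μ {ω | (∀ i ∈ (p : Finset Idx × Finset Idx).1, X i ω ≤ vk i) ∧
        (∀ j ∈ Rn k, X j ω ≤ uk j)}).toReal *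
      (μ {ω | (∀ i ∈ p.1.2, X i ω ≤ vn i) ∧
        (∀ j ∈ Rn n \ Mkn k n m, X j ω ≤ un j)}).toReal|

/-- Condition `D*(u_{k,j}, v_{k,i}, u_{n,j}, v_{n,i})` with exponent `e > 0`:
there exist `m_{n₁}, m_{n₂} → ∞` with `m_{n_i}/n_i → 0` such that
`sup_{k₁k₂ < n₁n₂} α*_{n,k,m_{n₁},m_{n₂}} = O((log log n₁ · log log n₂)^{-(1+e)})`. -/
def CondDstar (μ : Measure Ω) (X : Idx → Ω → ℝ) (u v : Idx → Idx → ℝ) (e : ℝ) : Prop :=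
  ∃ m1 m2 : ℕ → ℕ, Tendsto m1 atTop atTop ∧ Tendsto m2 atTop atTop ∧
    Tendsto (fun j : ℕ => (m1 j : ℝ) / j) atTop (nhds 0) ∧
    Tendsto (fun j : ℕ => (m2 j : ℝ) / j) atTop (nhds 0) ∧
    (fun n : Idx => ⨆ k : {k : Idx // k.1 * k.2 < n.1 * n.2},
        alphaStar μ X (u k) (v k) (u n) (v n) k n (m1 n.1, m2 n.2)) =O[atTop]
      fun n : Idx => (Real.log (Real.log n.1) * Real.log (Real.log n.2)) ^ (-(1 + e))

/-- The standard normal distribution function `Φ`. -/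
def Phi (x : ℝ) : ℝ := (gaussianReal 0 1 (Set.Iic x)).toReal

/-- The componentwise distance `|i - j|` of two indices. -/
def idxDist (i j : Idx) : Idx := (max i.1 j.1 - min i.1 j.1, max i.2 j.2 - min i.2 j.2)

/-- `Y` is a jointly Gaussian random field with mean `0`, variance `1` and
covariances `r i j`: every finite linear combination is centered Gaussian with the
corresponding variance. -/
def IsStdGaussianField (μ : Measure Ω) (Y : Idx → Ω → ℝ) (r : Idx → Idx → ℝ) : Prop :=
  (∀ i, r i i = 1) ∧
  ∀ (s : Finset Idx) (c : Idx → ℝ),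
    Measure.map (fun ω => ∑ i ∈ s, c i * Y i ω) μ =
      gaussianReal 0 (Real.toNNReal (∑ i ∈ s, ∑ j ∈ s, c i * c j * r i j))

/-- `|r_{i,j}| < ρ_{|i-j|}` for `i ≠ j`, with `ρ_m < 1` for `m ≠ 0`. -/
def CovDominated (r : Idx → Idx → ℝ) (ρ : Idx → ℝ) : Prop :=
  (∀ m : Idx, m ≠ 0 → ρ m < 1) ∧ ∀ i j : Idx, i ≠ j → |r i j| < ρ (idxDist i j)

/-- Condition (21): `ρ_{(m,0)} log m` and `ρ_{(0,m)} log m` are bounded and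
`ρ_m log (m₁ m₂) → 0`. -/
def Cond21 (ρ : Idx → ℝ) : Prop :=
  (∃ C, ∀ m : ℕ, |ρ (m, 0) * Real.log m| ≤ C) ∧
  (∃ C, ∀ m : ℕ, |ρ (0, m) * Real.log m| ≤ C) ∧
  Tendsto (fun m : Idx => ρ m * Real.log ((m.1 : ℝ) * m.2)) atTop (nhds 0)

/-- Condition (t21): for some `e > 0`, `ρ_{(m,0)} log m = O((log log m)^{-(1+e)})`,
`ρ_{(0,m)} log m = O((log log m)^{-(1+e)})` and
`ρ_m log (m₁ m₂) = O((log log m₁ · log log m₂)^{-(1+e)})`. -/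
def CondT21 (ρ : Idx → ℝ) : Prop :=
  ∃ e > (0 : ℝ),
    ((fun m : ℕ => ρ (m, 0) * Real.log m) =O[atTop]
      fun m : ℕ => Real.log (Real.log m) ^ (-(1 + e))) ∧
    ((fun m : ℕ => ρ (0, m) * Real.log m) =O[atTop]
      fun m : ℕ => Real.log (Real.log m) ^ (-(1 + e))) ∧
    ((fun m : Idx => ρ m * Real.log ((m.1 : ℝ) * m.2)) =O[atTop]
      fun m : Idx => (Real.log (Real.log m.1) * Real.log (Real.log m.2)) ^ (-(1 + e)))

/-- The maximum of `f` over a finite index set (junk value `0` if the set is empty). -/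
def finMax (s : Finset Idx) (f : Idx → ℝ) : ℝ := if h : s.Nonempty then s.sup' h f else 0

/-- `a_n = √(2 log (n₁ n₂))`. -/
def aN (n : Idx) : ℝ := Real.sqrt (2 * Real.log ((n.1 : ℝ) * n.2))

/-- `b_n = a_n - (log log (n₁ n₂) + log (4π)) / (2 a_n)`. -/
def bN (n : Idx) : ℝ :=
  aN n - (Real.log (Real.log ((n.1 : ℝ) * n.2)) + Real.log (4 * π)) / (2 * aN n)

/-- `a_n* = a_n - log log (n₁ n₂) / (2 a_n)`. -/
def aStarN (n : Idx) : ℝ := aN n - Real.log (Real.log ((n.1 : ℝ) * n.2)) / (2 * aN n)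

/-- The `r`-th largest of the `d` values `f 0, …, f (d-1)`. -/
def kthLargest {d : ℕ} (f : Fin d → ℝ) (r : ℕ) : ℝ :=
  (List.insertionSort (· ≥ ·) (List.ofFn f)).getD (r - 1) 0

/-! Write `S_n` for the weighted sums of the centered variables. For `1 / (1 + ϵ) < d < 1`
consider the grid of pairs from the sequence `a_j = ⌈exp (exp (j ^ d))⌉`. On it `log log a_j`
grows like `j ^ d`, so `(1 + ϵ) d > 1` makes the variances summable, and the averages converge
almost surely to `0` along the grid. Since `d < 1`, also `log a_{j+1}` and `log a_j` are
asymptotically equal. Adding a constant to the centered variables makes them nonnegative and moves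
the limit by that constant; then `S_n` is monotone in `n`, and the average at any `n` is squeezed
between those at the two neighbouring grid points. -/

section AlmostSureConvergence

variable {ι : Type*} [Countable ι] {μ : Measure Ω}

theorem ae_tendsto_cofinite_zero_of_tsum_lintegral_ne_top {f : ι → Ω → ENNReal}
    (hf : ∀ i, AEMeasurable (f i) μ) (hsum : ∑' i, ∫⁻ ω, f i ω ∂μ ≠ ⊤) :
    ∀ᵐ ω ∂μ, Tendsto (fun i => f i ω) cofinite (nhds 0) := by
  rw [← lintegral_tsum hf] at hsum
  filter_upwards [ae_lt_top' (AEMeasurable.tsum hf) hsum] with ω hω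
  exact ENNReal.tendsto_cofinite_zero_of_tsum_ne_top hω.ne

theorem ae_tendsto_sub_integral_of_tsum_evariance_ne_top {Z : ι → Ω → ℝ}
    (hZ : ∀ i, AEMeasurable (Z i) μ) (hsum : ∑' i, evariance (Z i) μ ≠ ⊤) :
    ∀ᵐ ω ∂μ, Tendsto (fun i => Z i ω - ∫ ω', Z i ω' ∂μ) cofinite (nhds 0) := by
  filter_upwards [ae_tendsto_cofinite_zero_of_tsum_lintegral_ne_top
    (fun i => ((hZ i).sub_const _).enorm.pow_const 2) hsum] with ω hω
  have hsqrt := hω.ennrpow_const (2⁻¹ : ℝ)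
  simp only [ENNReal.zero_rpow_of_pos (inv_pos.mpr (zero_lt_two' ℝ)), ← ENNReal.rpow_natCast,
    ← ENNReal.rpow_mul, Nat.cast_ofNat, mul_inv_cancel₀ (two_ne_zero' ℝ), ENNReal.rpow_one] at hsqrt
  exact tendsto_zero_iff_enorm_tendsto_zero.mpr hsqrt

theorem ae_tendsto_sub_integral_of_variance_isBigO [IsFiniteMeasure μ] {l : Filter ι}
    (hl : l ≤ cofinite) {Z : ι → Ω → ℝ} (hZ : ∀ i, MemLp (Z i) 2 μ) {u : ι → ℝ}
    (hu : Summable u) (hvar : (fun i => variance (Z i) μ) =O[l] u) :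
    ∀ᵐ ω ∂μ, Tendsto (fun i => Z i ω - ∫ ω', Z i ω' ∂μ) l (nhds 0) := by
  obtain ⟨C, hC⟩ := hvar.bound
  let s : Set ι := {i | ‖variance (Z i) μ‖ ≤ C * ‖u i‖}
  have hle (i : s) : evariance (Z i) μ ≤ ENNReal.ofReal (C * ‖u i‖) := by
    rw [← ofReal_variance (hZ i)]
    exact ENNReal.ofReal_le_ofReal ((Real.le_norm_self _).trans i.2)
  have hsum : ∑' i : s, evariance (Z i) μ ≠ ⊤ := ne_top_of_le_ne_top
    ((hu.norm.mul_left C).subtype s).tsum_ofReal_ne_top (ENNReal.tsum_le_tsum hle)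
  filter_upwards [ae_tendsto_sub_integral_of_tsum_evariance_ne_top
    (fun i : s => (hZ i).aemeasurable) hsum] with ω hω
  have hs : Set.range ((↑) : s → ι) ∈ l := by rwa [Subtype.range_coe]
  exact (tendsto_comap'_iff hs).mp
    (hω.mono_left ((comap_mono hl).trans (comap_cofinite_le _)))

theorem ae_bddBelow_range_sub_integral [IsFiniteMeasure μ] {X : ι → Ω → ℝ} {M : ℝ}
    (hX : ∀ i, ∀ᵐ ω ∂μ, |X i ω| ≤ M) :
    ∀ᵐ ω ∂μ, BddBelow (Set.range fun i => X i ω - ∫ ω', X i ω' ∂μ) := by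
  filter_upwards [ae_all_iff.mpr hX] with ω hω
  refine ⟨-M - M * μ.real Set.univ, Set.forall_mem_range.mpr fun i => ?_⟩
  exact sub_le_sub (neg_le_of_abs_le (hω i))
    ((Real.le_norm_self _).trans (norm_integral_le_of_norm_le_const (hX i)))

end AlmostSureConvergence

section Interpolation

theorem tendsto_div_of_monotone_of_isEquivalent {α ι : Type*} [Preorder α] {l : Filter α}
    {l' : Filter ι} {f g : α → ℝ} (hf : Monotone f) (hf0 : ∀ n, 0 ≤ f n) (hg : Monotone g)
    {lo hi : ι → α} {φ : α → ι} (hφ : Tendsto φ l l')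
    (hbracket : ∀ᶠ n in l, lo (φ n) ≤ n ∧ n ≤ hi (φ n)) (hpos : ∀ᶠ p in l', 0 < g (lo p))
    (hequiv : (fun p => g (hi p)) ~[l'] fun p => g (lo p)) {c : ℝ}
    (hlo : Tendsto (fun p => f (lo p) / g (lo p)) l' (nhds c))
    (hhi : Tendsto (fun p => f (hi p) / g (hi p)) l' (nhds c)) :
    Tendsto (fun n => f n / g n) l (nhds c) := by
  have hpos' : ∀ᶠ p in l', 0 < g (hi p) := hequiv.eventually_pos hpos
  have hratio : Tendsto (fun p => g (hi p) / g (lo p)) l' (nhds 1) :=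
    (isEquivalent_iff_tendsto_one (hpos.mono fun _ h => h.ne')).mp hequiv
  have hratio' : Tendsto (fun p => g (lo p) / g (hi p)) l' (nhds 1) :=
    (isEquivalent_iff_tendsto_one (hpos'.mono fun _ h => h.ne')).mp hequiv.symm
  have hlower : Tendsto (fun p => f (lo p) / g (hi p)) l' (nhds c) := by
    rw [← mul_one c]
    refine (hlo.mul hratio').congr' ?_
    filter_upwards [hpos] with p hp using div_mul_div_cancel₀ hp.ne'
  have hupper : Tendsto (fun p => f (hi p) / g (lo p)) l' (nhds c) := by
    rw [← mul_one c]
    refine (hhi.mul hratio).congr' ?_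
    filter_upwards [hpos'] with p hp using div_mul_div_cancel₀ hp.ne'
  refine tendsto_of_tendsto_of_tendsto_of_le_of_le' (hlower.comp hφ) (hupper.comp hφ) ?_ ?_
  · filter_upwards [hbracket, hφ.eventually hpos] with n ⟨hlo_le, hle_hi⟩ hn
    exact div_le_div₀ (hf0 n) (hf hlo_le) (hn.trans_le (hg hlo_le)) (hg hle_hi)
  · filter_upwards [hbracket, hφ.eventually hpos] with n ⟨hlo_le, hle_hi⟩ hn
    exact div_le_div₀ (hf0 _) (hf hle_hi) hn (hg hlo_le)

theorem exists_tendsto_bracket {α : Type*} [LinearOrder α] [NoMaxOrder α] {a : ℕ → α}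
    (ha : Tendsto a atTop atTop) :
    ∃ φ : α → ℕ, Tendsto φ atTop atTop ∧ ∀ᶠ n in atTop, a (φ n) ≤ n ∧ n ≤ a (φ n + 1) := by
  classical
  have hex (n : α) : ∃ j, n < a (j + 1) :=
    ((ha.comp (tendsto_add_atTop_nat 1)).eventually_gt_atTop n).exists
  refine ⟨fun n => Nat.find (hex n), tendsto_atTop.mpr fun b => ?_, ?_⟩
  · have hlarge : ∀ᶠ n in atTop, ∀ j ∈ Finset.range b, a (j + 1) ≤ n :=
      (Finset.eventually_all _).mpr fun j _ => eventually_ge_atTop _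
    filter_upwards [hlarge] with n hn
    exact (Nat.le_find_iff _ _).mpr fun j hj => (hn j (Finset.mem_range.mpr hj)).not_gt
  · filter_upwards [eventually_ge_atTop (a 0)] with n hn
    refine ⟨?_, (Nat.find_spec (hex n)).le⟩
    rcases hj : Nat.find (hex n) with _ | j
    · exact hn
    · exact not_lt.mp (Nat.find_min (hex n) (hj ▸ j.lt_succ_self))

end Interpolation

section LogAverage

/-- The logarithmic average `(log n₁ log n₂)⁻¹ ∑_{k ∈ R_n} x_k / (k₁ k₂)` of an array `x`, the
quantity whose convergence is at stake in almost sure limit theorems. Its value is the junk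
value `0` when `n₁ ≤ 1` or `n₂ ≤ 1`. -/
def logAverage (x : Idx → ℝ) (n : Idx) : ℝ :=
  (1 / (Real.log n.1 * Real.log n.2)) * ∑ k ∈ Rn n, x k / ((k.1 : ℝ) * k.2)

theorem logAverage_eq_div (x : Idx → ℝ) (n : Idx) :
    logAverage x n =
      (∑ k ∈ Rn n, x k / ((k.1 : ℝ) * k.2)) / (Real.log n.1 * Real.log n.2) :=
  one_div_mul_eq_div _ _

theorem logAverage_sub (x y : Idx → ℝ) (n : Idx) :
    logAverage (fun k => x k - y k) n = logAverage x n - logAverage y n := by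
  simp only [logAverage, sub_div, Finset.sum_sub_distrib, mul_sub]

theorem memLp_logAverage {μ : Measure Ω} {p : ENNReal} {X : Idx → Ω → ℝ}
    (hX : ∀ k, MemLp (X k) p μ) (n : Idx) :
    MemLp (fun ω => logAverage (fun k => X k ω) n) p μ := by
  simp only [logAverage, div_eq_mul_inv]
  exact (memLp_finsetSum _ fun k _ => (hX k).mul_const _).const_mul _

theorem integral_logAverage {μ : Measure Ω} {X : Idx → Ω → ℝ} (hX : ∀ k, Integrable (X k) μ)
    (n : Idx) :
    ∫ ω, logAverage (fun k => X k ω) n ∂μ = logAverage (fun k => ∫ ω, X k ω ∂μ) n := by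
  simp only [logAverage, integral_const_mul,
    integral_finsetSum _ fun k _ => (hX k).div_const _, integral_div]

theorem isEquivalent_harmonic_log :
    (fun n : ℕ => (harmonic n : ℝ)) ~[atTop] fun n => Real.log n := by
  refine (tendsto_harmonic_sub_log.isBigO_one ℝ).trans_isLittleO ?_
  exact isLittleO_const_log_atTop.comp_tendsto tendsto_natCast_atTop_atTop

theorem sum_Rn_div (c : ℝ) (n : Idx) :
    ∑ k ∈ Rn n, c / ((k.1 : ℝ) * k.2) = c * ((harmonic n.1 : ℝ) * harmonic n.2) := by
  simp only [harmonic_eq_sum_Icc, Rat.cast_sum, Rat.cast_inv, Rat.cast_natCast, div_eq_mul_inv,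
    mul_inv, ← Finset.mul_sum]
  rw [Finset.sum_mul_sum, ← Finset.sum_product']
  rfl

theorem tendsto_logAverage_const (c : ℝ) : Tendsto (logAverage fun _ => c) atTop (nhds c) := by
  have hlog : ∀ᶠ n : ℕ in atTop, Real.log n ≠ 0 :=
    (Real.tendsto_log_atTop.comp tendsto_natCast_atTop_atTop).eventually_ne_atTop 0
  have hratio : Tendsto (fun n : ℕ => (harmonic n : ℝ) / Real.log n) atTop (nhds 1) :=
    (isEquivalent_iff_tendsto_one hlog).mp isEquivalent_harmonic_log
  have hprod : Tendsto (fun n : Idx => (harmonic n.1 : ℝ) / Real.log n.1 *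
      ((harmonic n.2 : ℝ) / Real.log n.2)) atTop (nhds (1 * 1)) := by
    rw [← prod_atTop_atTop_eq]
    exact (hratio.comp tendsto_fst).mul (hratio.comp tendsto_snd)
  have hmean (n : Idx) : c * ((harmonic n.1 : ℝ) / Real.log n.1 *
      ((harmonic n.2 : ℝ) / Real.log n.2)) = logAverage (fun _ => c) n := by
    rw [logAverage_eq_div, sum_Rn_div, div_mul_div_comm, mul_div_assoc c]
  simpa only [hmean, mul_one] using hprod.const_mul c

theorem monotone_log_mul_log :
    Monotone fun n : Idx => Real.log n.1 * Real.log n.2 := by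
  have hlog : Monotone fun n : ℕ => Real.log n := fun m n hmn => by
    rcases m.eq_zero_or_pos with rfl | hm
    · simpa using Real.log_natCast_nonneg n
    · exact Real.log_le_log (by exact_mod_cast hm) (by exact_mod_cast hmn)
  exact fun m n hmn => mul_le_mul (hlog hmn.1) (hlog hmn.2) (Real.log_natCast_nonneg _)
    (Real.log_natCast_nonneg _)

theorem monotone_sum_Rn {w : Idx → ℝ} (hw : ∀ k, 0 ≤ w k) :
    Monotone fun n => ∑ k ∈ Rn n, w k := fun _ _ hmn =>
  Finset.sum_le_sum_of_subset_of_nonneg (Finset.Icc_subset_Icc_right hmn) fun k _ _ => hw k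

variable {x : Idx → ℝ} {a : ℕ → ℕ} {c : ℝ}

theorem tendsto_logAverage_of_nonneg (hx : ∀ k, 0 ≤ x k) (ha : Tendsto a atTop atTop)
    (hlog : (fun j => Real.log (a (j + 1))) ~[atTop] fun j => Real.log (a j))
    (hgrid : Tendsto (logAverage x ∘ Prod.map a a) atTop (nhds c)) :
    Tendsto (logAverage x) atTop (nhds c) := by
  obtain ⟨φ, hφ, hbracket⟩ := exists_tendsto_bracket ha
  have hterm (k : Idx) : 0 ≤ x k / ((k.1 : ℝ) * k.2) := div_nonneg (hx k) (by positivity)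
  have hpos : ∀ᶠ j in atTop, 0 < Real.log (a j) :=
    (Real.tendsto_log_atTop.comp (tendsto_natCast_atTop_atTop.comp ha)).eventually_gt_atTop 0
  have hsucc : Tendsto (Prod.map (· + 1) (· + 1) : ℕ × ℕ → ℕ × ℕ) atTop atTop :=
    (tendsto_add_atTop_nat 1).prod_atTop (tendsto_add_atTop_nat 1)
  rw [funext (logAverage_eq_div x)] at hgrid ⊢
  refine tendsto_div_of_monotone_of_isEquivalent (monotone_sum_Rn hterm)
    (fun n => Finset.sum_nonneg fun k _ => hterm k) monotone_log_mul_log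
    (hφ.prod_atTop hφ) ?_ ?_ ?_ hgrid (hgrid.comp hsucc)
  · rw [← prod_atTop_atTop_eq]
    filter_upwards [hbracket.prod_mk hbracket] with n ⟨h₁, h₂⟩
    exact ⟨⟨h₁.1, h₂.1⟩, ⟨h₁.2, h₂.2⟩⟩
  · rw [← prod_atTop_atTop_eq]
    filter_upwards [hpos.prod_mk hpos] with p ⟨h₁, h₂⟩ using mul_pos h₁ h₂
  · rw [← prod_atTop_atTop_eq]
    exact (hlog.comp_tendsto tendsto_fst).mul (hlog.comp_tendsto tendsto_snd)

theorem tendsto_logAverage_of_bddBelow (hx : BddBelow (Set.range x))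
    (ha : Tendsto a atTop atTop)
    (hlog : (fun j => Real.log (a (j + 1))) ~[atTop] fun j => Real.log (a j))
    (hgrid : Tendsto (logAverage x ∘ Prod.map a a) atTop (nhds c)) :
    Tendsto (logAverage x) atTop (nhds c) := by
  obtain ⟨b, hb⟩ := hx
  have hshift : Tendsto (logAverage fun k => x k - b) atTop (nhds (c - b)) := by
    refine tendsto_logAverage_of_nonneg
      (fun k => sub_nonneg.mpr (hb (Set.mem_range_self k))) ha hlog ?_
    simpa only [Function.comp_def, logAverage_sub] using
      hgrid.sub ((tendsto_logAverage_const b).comp (ha.prod_atTop ha))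
  simpa only [logAverage_sub, sub_add_cancel] using hshift.add (tendsto_logAverage_const b)

end LogAverage

section DoubleExponentialGrid

theorem tendsto_add_one_rpow_sub_rpow {d : ℝ} (hd0 : 0 ≤ d) (hd1 : d < 1) :
    Tendsto (fun x : ℝ => (x + 1) ^ d - x ^ d) atTop (nhds 0) := by
  have hupper : Tendsto (fun x : ℝ => d * x ^ (-(1 - d))) atTop (nhds 0) := by
    simpa only [mul_zero] using (tendsto_rpow_neg_atTop (sub_pos.mpr hd1)).const_mul d
  refine tendsto_of_tendsto_of_tendsto_of_le_of_le' tendsto_const_nhds hupper ?_ ?_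
  · filter_upwards [eventually_ge_atTop 0] with x hx
    exact sub_nonneg.mpr (Real.rpow_le_rpow hx (by linarith) hd0)
  · filter_upwards [eventually_gt_atTop 0] with x hx
    have hbernoulli : (1 + x⁻¹) ^ d ≤ 1 + d * x⁻¹ :=
      rpow_one_add_le_one_add_mul_self (by linarith [inv_pos.mpr hx]) hd0 hd1.le
    calc (x + 1) ^ d - x ^ d
        = x ^ d * (1 + x⁻¹) ^ d - x ^ d := by
          rw [← Real.mul_rpow hx.le (by positivity), mul_add, mul_one, mul_inv_cancel₀ hx.ne']
      _ ≤ x ^ d * (1 + d * x⁻¹) - x ^ d := by gcongr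
      _ = d * x ^ (-(1 - d)) := by
          rw [neg_sub, Real.rpow_sub_one hx.ne']
          ring

/-- The grid `⌈exp (exp (j ^ d))⌉`. Its iterated logarithm grows like `j ^ d`, which for `d < 1`
is slow enough for the logarithms of consecutive points to be asymptotically equal. -/
def doubleExpGrid (d : ℝ) (j : ℕ) : ℕ := ⌈Real.exp (Real.exp ((j : ℝ) ^ d))⌉₊

variable {d : ℝ}

theorem tendsto_exp_natCast_rpow (hd : 0 < d) :
    Tendsto (fun j : ℕ => Real.exp ((j : ℝ) ^ d)) atTop atTop :=
  Real.tendsto_exp_atTop.comp ((tendsto_rpow_atTop hd).comp tendsto_natCast_atTop_atTop)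

theorem tendsto_doubleExpGrid (hd : 0 < d) : Tendsto (doubleExpGrid d) atTop atTop :=
  tendsto_nat_ceil_atTop.comp (Real.tendsto_exp_atTop.comp (tendsto_exp_natCast_rpow hd))

theorem isEquivalent_log_doubleExpGrid (hd : 0 < d) :
    (fun j => Real.log (doubleExpGrid d j)) ~[atTop] fun j : ℕ => Real.exp ((j : ℝ) ^ d) := by
  have htop := Real.tendsto_exp_atTop.comp (tendsto_exp_natCast_rpow hd)
  simpa only [doubleExpGrid, Function.comp_def, Real.log_exp] using
    (isEquivalent_nat_ceil.comp_tendsto htop).log htop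

theorem isEquivalent_log_log_doubleExpGrid (hd : 0 < d) :
    (fun j => Real.log (Real.log (doubleExpGrid d j))) ~[atTop] fun j : ℕ => (j : ℝ) ^ d := by
  simpa only [Real.log_exp] using
    (isEquivalent_log_doubleExpGrid hd).log (tendsto_exp_natCast_rpow hd)

theorem isEquivalent_log_doubleExpGrid_succ (hd0 : 0 < d) (hd1 : d < 1) :
    (fun j => Real.log (doubleExpGrid d (j + 1))) ~[atTop]
      fun j => Real.log (doubleExpGrid d j) := by
  have hexp : (fun j : ℕ => Real.exp (((j + 1 : ℕ) : ℝ) ^ d)) ~[atTop]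
      fun j : ℕ => Real.exp ((j : ℝ) ^ d) := by
    refine isEquivalent_of_tendsto_one ?_
    have hdiff := (tendsto_add_one_rpow_sub_rpow hd0.le hd1).comp
      (tendsto_natCast_atTop_atTop (R := ℝ))
    simpa [Function.comp_def, Pi.div_def, Real.exp_sub] using hdiff.rexp
  have hlog := isEquivalent_log_doubleExpGrid hd0
  exact ((hlog.comp_tendsto (tendsto_add_atTop_nat 1)).trans hexp).trans hlog.symm

theorem summable_log_log_doubleExpGrid_rpow_neg (hd : 0 < d) {s : ℝ} (hs : 1 < d * s) :
    Summable fun j => Real.log (Real.log (doubleExpGrid d j)) ^ (-s) := by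
  have hequiv : (fun j => Real.log (Real.log (doubleExpGrid d j)) ^ (-s)) ~[atTop]
      fun j : ℕ => ((j : ℝ) ^ d) ^ (-s) :=
    (isEquivalent_log_log_doubleExpGrid hd).rpow fun j => Real.rpow_nonneg j.cast_nonneg d
  refine summable_of_isEquivalent_nat ?_ hequiv
  simp only [← Real.rpow_mul (Nat.cast_nonneg _), mul_neg]
  exact Real.summable_nat_rpow.mpr (neg_lt_neg hs)

theorem log_log_doubleExpGrid_mul_rpow_eventuallyEq (hd : 0 < d) (r : ℝ) :
    (fun p : ℕ × ℕ => (Real.log (Real.log (doubleExpGrid d p.1)) *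
        Real.log (Real.log (doubleExpGrid d p.2))) ^ r) =ᶠ[atTop]
      fun p => Real.log (Real.log (doubleExpGrid d p.1)) ^ r *
        Real.log (Real.log (doubleExpGrid d p.2)) ^ r := by
  have hnonneg : ∀ᶠ j in atTop, 0 ≤ Real.log (Real.log (doubleExpGrid d j)) :=
    (isEquivalent_log_log_doubleExpGrid hd).eventually_nonneg
      (.of_forall fun j => Real.rpow_nonneg j.cast_nonneg d)
  rw [← prod_atTop_atTop_eq]
  filter_upwards [hnonneg.prod_mk hnonneg] with p ⟨h₁, h₂⟩ using Real.mul_rpow h₁ h₂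

end DoubleExponentialGrid

theorem exists_mem_Ioo_one_lt_mul {s : ℝ} (hs : 1 < s) : ∃ d ∈ Set.Ioo (0 : ℝ) 1, 1 < d * s := by
  obtain ⟨d, hsd, hd1⟩ := exists_between (inv_lt_one_of_one_lt₀ hs)
  have hs0 : 0 < s := one_pos.trans hs
  exact ⟨d, ⟨(inv_pos.mpr hs0).trans hsd, hd1⟩, (inv_lt_iff_one_lt_mul₀ hs0).mp hsd⟩

theorem variance_criterion_asclt_general {μ : Measure Ω} [IsFiniteMeasure μ]
    {η : Idx → Ω → ℝ} (hη : ∀ k, MemLp (η k) 2 μ)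
    (hbdd : ∀ᵐ ω ∂μ, BddBelow (Set.range fun k => η k ω - ∫ ω', η k ω' ∂μ))
    {e : ℝ} (he : 0 < e)
    (hvar : (fun n => variance (fun ω => logAverage (fun k => η k ω) n) μ) =O[atTop]
      fun n => (Real.log (Real.log n.1) * Real.log (Real.log n.2)) ^ (-(1 + e))) :
    ∀ᵐ ω ∂μ, Tendsto (logAverage fun k => η k ω - ∫ ω', η k ω' ∂μ) atTop (nhds 0) := by
  obtain ⟨d, ⟨hd0, hd1⟩, hds⟩ := exists_mem_Ioo_one_lt_mul (lt_add_of_pos_right 1 he)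
  have ha := tendsto_doubleExpGrid hd0
  have hsum := summable_log_log_doubleExpGrid_rpow_neg hd0 hds
  have hvar_grid := (hvar.comp_tendsto (ha.prod_atTop ha)).trans_eventuallyEq
    (log_log_doubleExpGrid_mul_rpow_eventuallyEq hd0 _)
  have hgrid := ae_tendsto_sub_integral_of_variance_isBigO atTop_le_cofinite
    (fun p => memLp_logAverage hη (Prod.map (doubleExpGrid d) (doubleExpGrid d) p))
    (summable_mul_of_summable_norm hsum.norm hsum.norm) hvar_grid
  filter_upwards [hgrid, hbdd] with ω hω hbdd_ω
  refine tendsto_logAverage_of_bddBelow hbdd_ω ha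
    (isEquivalent_log_doubleExpGrid_succ hd0 hd1) ?_
  simpa only [Function.comp_def, logAverage_sub,
    integral_logAverage fun k => (hη k).integrable one_le_two] using hω

/-- **Lemma 4.3** (Tan and Wang): summation-by-variance criterion for two-dimensional
almost sure limit theorems. -/
theorem variance_criterion_asclt
    {Ω : Type*} [MeasureSpace Ω] [IsProbabilityMeasure (ℙ : Measure Ω)]
    (η : Idx → Ω → ℝ) (M : ℝ)
    (hmeas : ∀ k, Measurable (η k))
    (hbdd : ∀ k : Idx, ∀ᵐ ω ∂ℙ, |η k ω| ≤ M)
    (e : ℝ) (he : 0 < e)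
    (hvar : (fun n : Idx => variance (fun ω => (1 / (Real.log n.1 * Real.log n.2)) *
        ∑ k ∈ Rn n, η k ω / ((k.1 : ℝ) * k.2)) ℙ) =O[atTop]
      fun n : Idx => (Real.log (Real.log n.1) * Real.log (Real.log n.2)) ^ (-(1 + e))) :
    ∀ᵐ ω ∂ℙ, Tendsto (fun n : Idx => (1 / (Real.log n.1 * Real.log n.2)) *
        ∑ k ∈ Rn n, (η k ω - ∫ ω', η k ω' ∂ℙ) / ((k.1 : ℝ) * k.2)) atTop (nhds 0) := by
  have hη : ∀ k, MemLp (η k) 2 ℙ := fun k =>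
    MemLp.of_bound (hmeas k).aestronglyMeasurable M (hbdd k)
  exact variance_criterion_asclt_general hη (ae_bddBelow_range_sub_integral hbdd) he hvar

end RandomFieldMissing
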